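/- Let f : ℝ^D × ℝ^{d'} → ℝ be ℓ-Lipschitz smooth; for α > 0 define f_α(x, y) := E_v[f(x + αv, y)], with v uniform on the closed Euclidean ball of radius √D in ℝ^D. Fix x ∈ ℝ^D and y ∈ ℝ^{d'}; suppose y ↦ f(x, y) has a unique maximizer y*(x), set g(x) := f(x, y*(x)), and assume ∇g(x) = ∇_x f(x, y*(x)). Let H be a symmetric positive semidefinite D×D matrix and γ ≥ 1 such that g satisfies the quadratic upper bound g(x − w) ≤ g(x) − ⟨∇g(x), w⟩ + (1/2)wᵀHw for all w ∈ ℝ^D. Let Ĝ be a random vector with E[Ĝ] = ∇_x f_α(x, y) and E[ĜᵀHĜ] ≤ ℓγ·E[‖G_ξ‖²], where G_ξ is a random vector with E[G_ξ] = ∇_x f(x, y) and E[‖G_ξ − ∇_x f(x, y)‖²] ≤ σ²/B. Then, with step size ζ = 1/(2ℓγ) and update x⁺ := x − ζĜ, one has ‖∇_x f(x, y)‖² ≤ 16ℓγ·(g(x) − E[g(x⁺)]) + 16ℓ²·‖y − y*(x)‖² + 2σ²/B + (11/2)·α²ℓ²D³. -/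

import Mathlib

open MeasureTheory Metric RealInnerProductSpace

/-- The uniform probability measure on the closed Euclidean ball of radius `√D`
centered at the origin in `ℝ^D`. -/
noncomputable def uniformBall (D : ℕ) : Measure (EuclideanSpace ℝ (Fin D)) :=
  (volume (closedBall (0 : EuclideanSpace ℝ (Fin D)) (Real.sqrt D)))⁻¹ •
    volume.restrict (closedBall (0 : EuclideanSpace ℝ (Fin D)) (Real.sqrt D))

/-- `ℝ^D × ℝ^{d'}` with the Euclidean (`L²`) product norm. -/
abbrev EuclideanProd (D d' : ℕ) :=
  WithLp 2 (EuclideanSpace ℝ (Fin D) × EuclideanSpace ℝ (Fin d'))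

/-- The point of `ℝ^D × ℝ^{d'}` (with the Euclidean product norm) with components `x, y`. -/
noncomputable def euclidPair {D d' : ℕ} (x : EuclideanSpace ℝ (Fin D))
    (y : EuclideanSpace ℝ (Fin d')) : EuclideanProd D d' :=
  (WithLp.equiv 2 (EuclideanSpace ℝ (Fin D) × EuclideanSpace ℝ (Fin d'))).symm (x, y)

noncomputable def inclL (D d' : ℕ) : EuclideanSpace ℝ (Fin D) →L[ℝ] EuclideanProd D d' :=
  ((WithLp.prodContinuousLinearEquiv 2 ℝ (EuclideanSpace ℝ (Fin D))
    (EuclideanSpace ℝ (Fin d'))).symm.toContinuousLinearMap).comp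
    (ContinuousLinearMap.inl ℝ (EuclideanSpace ℝ (Fin D)) (EuclideanSpace ℝ (Fin d')))

lemma euclidPair_sub' {D d' : ℕ} (x x' : EuclideanSpace ℝ (Fin D))
    (y y' : EuclideanSpace ℝ (Fin d')) :
    euclidPair x y - euclidPair x' y' = euclidPair (x - x') (y - y') := rfl

lemma norm_euclidPair_left {D d' : ℕ} (x : EuclideanSpace ℝ (Fin D)) :
    ‖(euclidPair x 0 : EuclideanProd D d')‖ = ‖x‖ := by
  rw [WithLp.prod_norm_eq_of_L2]
  simp [euclidPair]

lemma norm_euclidPair_right {D d' : ℕ} (y : EuclideanSpace ℝ (Fin d')) :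
    ‖(euclidPair 0 y : EuclideanProd D d')‖ = ‖y‖ := by
  rw [WithLp.prod_norm_eq_of_L2]
  simp [euclidPair]

lemma inclL_norm (D d' : ℕ) : ‖inclL D d'‖ ≤ 1 := by
  refine ContinuousLinearMap.opNorm_le_bound _ zero_le_one fun x => ?_
  rw [one_mul]
  exact (norm_euclidPair_left x).le

lemma hasFDeriv_pair {D d' : ℕ} (x : EuclideanSpace ℝ (Fin D)) (y : EuclideanSpace ℝ (Fin d')) :
    HasFDerivAt (fun x' => (euclidPair x' y : EuclideanProd D d')) (inclL D d') x := by
  have h : (fun x' => (euclidPair x' y : EuclideanProd D d'))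
      = fun x' => inclL D d' x' + euclidPair 0 y := by
    funext x'
    have : (inclL D d' x' : EuclideanProd D d') = euclidPair x' 0 := rfl
    rw [this]
    have : (euclidPair x' 0 : EuclideanProd D d') + euclidPair 0 y
      = euclidPair (x' + 0) (0 + y) := rfl
    rw [this]; simp
  rw [h]
  exact (inclL D d').hasFDerivAt.add_const _

lemma grad_sub_norm {E : Type*} [NormedAddCommGroup E] [InnerProductSpace ℝ E] [CompleteSpace E]
    (φ ψ : E → ℝ) (a b : E) :
    ‖gradient φ a - gradient ψ b‖ = ‖fderiv ℝ φ a - fderiv ℝ ψ b‖ := by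
  unfold gradient
  rw [← map_sub, LinearIsometryEquiv.norm_map]

lemma partial_lip {D d' : ℕ} {ℓ : ℝ} (f : EuclideanProd D d' → ℝ) (hdiff : Differentiable ℝ f)
    (hlip : ∀ z₁ z₂, ‖gradient f z₁ - gradient f z₂‖ ≤ ℓ * ‖z₁ - z₂‖)
    (x x' : EuclideanSpace ℝ (Fin D)) (y y' : EuclideanSpace ℝ (Fin d')) :
    ‖fderiv ℝ (fun u => f (euclidPair u y)) x - fderiv ℝ (fun u => f (euclidPair u y')) x'‖
      ≤ ℓ * ‖(euclidPair (x - x') (y - y') : EuclideanProd D d')‖ := by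
  have h1 := ((hdiff (euclidPair x y)).hasFDerivAt.comp x (hasFDeriv_pair x y)).fderiv
  have h2 := ((hdiff (euclidPair x' y')).hasFDerivAt.comp x' (hasFDeriv_pair x' y')).fderiv
  simp only [Function.comp_def] at h1 h2
  rw [h1, h2, ← ContinuousLinearMap.sub_comp]
  refine (ContinuousLinearMap.opNorm_comp_le _ _).trans ?_
  have := hlip (euclidPair x y) (euclidPair x' y')
  rw [grad_sub_norm, euclidPair_sub'] at this
  refine le_trans ?_ this
  exact mul_le_of_le_one_right (norm_nonneg _) (inclL_norm D d')

lemma uniformBall_prob {D : ℕ} (hD : 0 < D) : IsProbabilityMeasure (uniformBall D) := by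
  constructor
  have hr : 0 < Real.sqrt D := Real.sqrt_pos.2 (by exact_mod_cast hD)
  have h0 : volume (closedBall (0 : EuclideanSpace ℝ (Fin D)) (Real.sqrt D)) ≠ 0 :=
    (measure_closedBall_pos _ _ hr).ne'
  have h1 : volume (closedBall (0 : EuclideanSpace ℝ (Fin D)) (Real.sqrt D)) ≠ ⊤ :=
    measure_closedBall_lt_top.ne
  simp only [uniformBall, Measure.smul_apply, Measure.restrict_apply_univ, smul_eq_mul]
  exact ENNReal.inv_mul_cancel h0 h1

lemma uniformBall_ae (D : ℕ) : ∀ᵐ v ∂(uniformBall D), ‖v‖ ≤ Real.sqrt D := by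
  unfold uniformBall
  refine Measure.ae_smul_measure ?_ _
  filter_upwards [ae_restrict_mem measurableSet_closedBall] with v hv
  simpa using hv

lemma smooth_bias {D : ℕ} {ℓ α : ℝ} (hℓ : 0 < ℓ) (hα : 0 < α)
    (φ : EuclideanSpace ℝ (Fin D) → ℝ) (hφ : Differentiable ℝ φ)
    (hl : ∀ a b, ‖fderiv ℝ φ a - fderiv ℝ φ b‖ ≤ ℓ * ‖a - b‖) (x : EuclideanSpace ℝ (Fin D)) :
    ‖gradient (fun x' => ∫ v, φ (x' + α • v) ∂(uniformBall D)) x - gradient φ x‖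
      ≤ ℓ * α * Real.sqrt D := by
  rcases Nat.eq_zero_or_pos D with hD | hD
  · subst hD
    rw [Subsingleton.elim (gradient (fun x' => ∫ v, φ (x' + α • v) ∂(uniformBall 0)) x)
      (gradient φ x)]
    simp
  have := uniformBall_prob hD
  have hcont : Continuous (fderiv ℝ φ) :=
    (LipschitzWith.of_dist_le_mul (K := ⟨ℓ, hℓ.le⟩) fun a b => by
      rw [dist_eq_norm, dist_eq_norm]; exact hl a b).continuous
  have hbd : ∀ᵐ v ∂(uniformBall D), ∀ x' ∈ ball x 1,
      ‖fderiv ℝ φ (x' + α • v)‖ ≤ ‖fderiv ℝ φ x‖ + ℓ * (1 + α * Real.sqrt D) := by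
    filter_upwards [uniformBall_ae D] with v hv x' hx'
    have h1 := hl (x' + α • v) x
    have h2 : ‖x' + α • v - x‖ ≤ 1 + α * Real.sqrt D := by
      have : x' + α • v - x = (x' - x) + α • v := by abel
      rw [this]
      refine (norm_add_le _ _).trans ?_
      rw [norm_smul, Real.norm_of_nonneg hα.le]
      have := mem_ball_iff_norm.1 hx'
      have := mul_le_mul_of_nonneg_left hv hα.le
      linarith
    have h3 := mul_le_mul_of_nonneg_left h2 hℓ.le
    have h4 := norm_sub_norm_le (fderiv ℝ φ (x' + α • v)) (fderiv ℝ φ x)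
    linarith
  have hφc := hφ.continuous
  have hcx : ∀ x' : EuclideanSpace ℝ (Fin D), Continuous fun v => φ (x' + α • v) := fun x' => by
    fun_prop
  have hdc : Continuous fun v => fderiv ℝ φ (x + α • v) := by fun_prop
  have hint : Integrable (fun v => φ (x + α • v)) (uniformBall D) := by
    obtain ⟨C, hC⟩ := (isCompact_closedBall (0 : EuclideanSpace ℝ (Fin D))
      (Real.sqrt D)).exists_bound_of_continuousOn (hcx x).continuousOn
    refine Integrable.of_bound (hcx x).aestronglyMeasurable C ?_
    filter_upwards [uniformBall_ae D] with v hv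
    exact hC v (by simpa using hv)
  have key : HasFDerivAt (fun x' => ∫ v, φ (x' + α • v) ∂(uniformBall D))
      (∫ v, fderiv ℝ φ (x + α • v) ∂(uniformBall D)) x := by
    refine hasFDerivAt_integral_of_dominated_of_fderiv_le
      (F' := fun x' v => fderiv ℝ φ (x' + α • v))
      (bound := fun _ => ‖fderiv ℝ φ x‖ + ℓ * (1 + α * Real.sqrt D))
      (ball_mem_nhds x one_pos) (Filter.Eventually.of_forall fun x' =>
      (hcx x').aestronglyMeasurable) hint hdc.aestronglyMeasurable hbd (integrable_const _) ?_
    refine Filter.Eventually.of_forall fun v x' _ => ?_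
    have := (hφ (x' + α • v)).hasFDerivAt.comp x' ((hasFDerivAt_id x').add_const (α • v))
    simpa [Function.comp_def] using this
  have hdint : Integrable (fun v => fderiv ℝ φ (x + α • v)) (uniformBall D) := by
    refine Integrable.of_bound hdc.aestronglyMeasurable
      (‖fderiv ℝ φ x‖ + ℓ * (1 + α * Real.sqrt D)) ?_
    filter_upwards [hbd] with v hv
    exact hv x (mem_ball_self one_pos)
  rw [grad_sub_norm, key.fderiv]
  have : (∫ v, fderiv ℝ φ (x + α • v) ∂(uniformBall D)) - fderiv ℝ φ x
      = ∫ v, (fderiv ℝ φ (x + α • v) - fderiv ℝ φ x) ∂(uniformBall D) := by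
    rw [integral_sub hdint (integrable_const _)]; simp
  rw [this]
  have := norm_integral_le_of_norm_le_const (μ := uniformBall D)
    (f := fun v => fderiv ℝ φ (x + α • v) - fderiv ℝ φ x) (C := ℓ * α * Real.sqrt D) ?_
  · simpa using this
  filter_upwards [uniformBall_ae D] with v hv
  refine (hl _ _).trans ?_
  rw [add_sub_cancel_left, norm_smul, Real.norm_of_nonneg hα.le, mul_assoc]
  gcongr

lemma final_alg {E : Type*} [NormedAddCommGroup E] [InnerProductSpace ℝ E]
    (a p m : E) (u e : ℝ) (hu : ‖a - p‖ ^ 2 ≤ u) (he : ‖m - a‖ ^ 2 ≤ e) :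
    3 * ‖a‖ ^ 2 ≤ 8 * inner ℝ p m + 16 * u + 11 / 2 * e := by
  obtain ⟨δ, rfl⟩ : ∃ δ, p = a + δ := ⟨p - a, by abel⟩
  obtain ⟨ε, rfl⟩ : ∃ ε, m = a + ε := ⟨m - a, by abel⟩
  rw [sub_add_cancel_left, norm_neg] at hu
  rw [add_sub_cancel_left] at he
  have h1 : 0 ≤ ‖(5:ℝ) • a + (4:ℝ) • (δ + ε)‖ ^ 2 := by positivity
  have h2 : 0 ≤ ‖δ + ε‖ ^ 2 := by positivity
  rw [norm_add_sq_real, norm_smul, norm_smul, inner_smul_left, inner_smul_right,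
    inner_add_right, mul_pow, mul_pow, norm_add_sq_real] at h1
  rw [norm_add_sq_real] at h2
  rw [inner_add_left, inner_add_right, inner_add_right, real_inner_self_eq_norm_sq,
    real_inner_comm a δ]
  have hd := sq_nonneg ‖δ‖
  have hee := sq_nonneg ‖ε‖
  norm_num at h1
  linarith

/-- One step of the zeroth-order outer update: under an `H`-weighted
quadratic upper bound on `g x = f (x, y*(x))`, an unbiased surrogate gradient `Ĝ` for
`∇ₓ f_α (x, y)` whose `H`-weighted second moment is controlled by `ℓγ·E[‖G_ξ‖²]`, where
`G_ξ` is an unbiased stochastic gradient of `∇ₓ f (x, y)` with variance `σ²/B`, the update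
`x⁺ = x − ζ Ĝ` with `ζ = 1/(2ℓγ)` satisfies
`‖∇ₓ f (x, y)‖² ≤ 16ℓγ (g x − E[g x⁺]) + 16ℓ² ‖y − y*(x)‖² + 2σ²/B + (11/2) α²ℓ²D³`. -/
theorem stmt8 (D d' : ℕ) (ℓ α γ σ B : ℝ) (hℓ : 0 < ℓ) (hα : 0 < α) (hγ : 1 ≤ γ)
    (hσ : 0 < σ) (hB : 1 ≤ B)
    (f : EuclideanProd D d' → ℝ) (hdiff : Differentiable ℝ f)
    (hlip : ∀ z₁ z₂, ‖gradient f z₁ - gradient f z₂‖ ≤ ℓ * ‖z₁ - z₂‖)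
    (x : EuclideanSpace ℝ (Fin D)) (y : EuclideanSpace ℝ (Fin d'))
    (ystar : EuclideanSpace ℝ (Fin D) → EuclideanSpace ℝ (Fin d'))
    (hmax : ∀ y', f (euclidPair x y') ≤ f (euclidPair x (ystar x)))
    (huniq : ∀ y'', (∀ y', f (euclidPair x y') ≤ f (euclidPair x y'')) → y'' = ystar x)
    (hgradg : gradient (fun x' => f (euclidPair x' (ystar x'))) x
      = gradient (fun x' => f (euclidPair x' (ystar x))) x)
    (H : Matrix (Fin D) (Fin D) ℝ) (hHsymm : H.IsSymm) (hHpsd : H.PosSemidef)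
    (hquad : ∀ w : EuclideanSpace ℝ (Fin D),
      f (euclidPair (x - w) (ystar (x - w)))
        ≤ f (euclidPair x (ystar x))
          - ⟪gradient (fun x' => f (euclidPair x' (ystar x'))) x, w⟫
          + 1 / 2 * ∑ i, ∑ j, w i * H i j * w j)
    (Ω : Type*) [MeasurableSpace Ω] (μ : Measure Ω) [IsProbabilityMeasure μ]
    (Ghat Gxi : Ω → EuclideanSpace ℝ (Fin D))
    (hGhatInt : Integrable Ghat μ)
    (hGhatMean : (∫ ω, Ghat ω ∂μ)
      = gradient (fun x' => ∫ v, f (euclidPair (x' + α • v) y) ∂(uniformBall D)) x)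
    (hGhatQuadInt : Integrable (fun ω => ∑ i, ∑ j, Ghat ω i * H i j * Ghat ω j) μ)
    (hGxiInt : Integrable Gxi μ)
    (hGxiSqInt : Integrable (fun ω => ‖Gxi ω‖ ^ 2) μ)
    (hGxiMean : (∫ ω, Gxi ω ∂μ) = gradient (fun x' => f (euclidPair x' y)) x)
    (hGxiVarInt : Integrable
      (fun ω => ‖Gxi ω - gradient (fun x' => f (euclidPair x' y)) x‖ ^ 2) μ)
    (hGxiVar : (∫ ω, ‖Gxi ω - gradient (fun x' => f (euclidPair x' y)) x‖ ^ 2 ∂μ)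
      ≤ σ ^ 2 / B)
    (hHmoment : (∫ ω, ∑ i, ∑ j, Ghat ω i * H i j * Ghat ω j ∂μ)
      ≤ ℓ * γ * ∫ ω, ‖Gxi ω‖ ^ 2 ∂μ)
    (hPlusInt : Integrable
      (fun ω => f (euclidPair (x - (1 / (2 * ℓ * γ)) • Ghat ω)
        (ystar (x - (1 / (2 * ℓ * γ)) • Ghat ω)))) μ) :
    ‖gradient (fun x' => f (euclidPair x' y)) x‖ ^ 2
      ≤ 16 * ℓ * γ * (f (euclidPair x (ystar x))
          - ∫ ω, f (euclidPair (x - (1 / (2 * ℓ * γ)) • Ghat ω)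
              (ystar (x - (1 / (2 * ℓ * γ)) • Ghat ω))) ∂μ)
        + 16 * ℓ ^ 2 * ‖y - ystar x‖ ^ 2 + 2 * σ ^ 2 / B
        + 11 / 2 * α ^ 2 * ℓ ^ 2 * (D : ℝ) ^ 3 := by
  set φ := fun x' => f (euclidPair x' y) with hφ
  set p := gradient (fun x' => f (euclidPair x' (ystar x))) x with hp
  set a := gradient φ x with ha
  rw [hgradg] at hquad
  have hφd : Differentiable ℝ φ := fun u =>
    ((hdiff _).hasFDerivAt.comp u (hasFDeriv_pair u y)).differentiableAt
  have hbias := smooth_bias hℓ hα φ hφd (fun b c => by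
    have := partial_lip f hdiff hlip b c y y
    rwa [sub_self, norm_euclidPair_left] at this) x
  rw [← hGhatMean, ← ha] at hbias
  have hap : ‖a - p‖ ≤ ℓ * ‖y - ystar x‖ := by
    rw [ha, hp, grad_sub_norm]
    have := partial_lip f hdiff hlip x x y (ystar x)
    rwa [sub_self, norm_euclidPair_right] at this
  set m := ∫ ω, Ghat ω ∂μ with hm
  have hvar : ∫ ω, ‖Gxi ω‖ ^ 2 ∂μ ≤ ‖a‖ ^ 2 + σ ^ 2 / B := by
    have h : (∫ ω, ‖Gxi ω - a‖ ^ 2 ∂μ) = (∫ ω, ‖Gxi ω‖ ^ 2 ∂μ) - ‖a‖ ^ 2 := by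
      have e1 : (fun ω => ‖Gxi ω - a‖ ^ 2)
          = fun ω => ‖Gxi ω‖ ^ 2 - 2 * inner ℝ a (Gxi ω) + ‖a‖ ^ 2 := by
        funext ω; rw [norm_sub_sq_real, real_inner_comm]
      have i1 : Integrable (fun ω => 2 * inner ℝ a (Gxi ω)) μ :=
        (hGxiInt.const_inner a).const_mul 2
      have i2 : Integrable (fun ω => ‖Gxi ω‖ ^ 2 - 2 * inner ℝ a (Gxi ω)) μ := hGxiSqInt.sub i1
      rw [e1, integral_add i2 (integrable_const _), integral_sub hGxiSqInt i1,
        integral_const_mul, integral_inner hGxiInt, hGxiMean, real_inner_self_eq_norm_sq]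
      simp
      ring
    linarith
  set ζ := 1 / (2 * ℓ * γ) with hζ
  have hlg : 0 < ℓ * γ := by positivity
  set Q := ∫ ω, ∑ i, ∑ j, Ghat ω i * H i j * Ghat ω j ∂μ with hQ
  have hstep : (∫ ω, f (euclidPair (x - ζ • Ghat ω) (ystar (x - ζ • Ghat ω))) ∂μ)
      ≤ f (euclidPair x (ystar x)) - ζ * inner ℝ p m + 1 / 2 * ζ ^ 2 * Q := by
    have i1 : Integrable (fun ω => ζ * inner ℝ p (Ghat ω)) μ :=
      (hGhatInt.const_inner p).const_mul ζ
    have i2 := hGhatQuadInt.const_mul (1 / 2 * ζ ^ 2)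
    have i3 : Integrable (fun ω => f (euclidPair x (ystar x)) - ζ * inner ℝ p (Ghat ω)) μ :=
      (integrable_const _).sub i1
    have := integral_mono (μ := μ) hPlusInt (i3.add i2) (fun ω => ?_)
    · refine this.trans_eq ?_
      simp only [Pi.add_apply]
      rw [integral_add i3 i2, integral_sub (integrable_const _) i1, integral_const_mul,
        integral_const_mul, integral_inner hGhatInt]
      simp [hQ, hm]
    · have := hquad (ζ • Ghat ω)
      refine this.trans_eq ?_
      simp only [Pi.add_apply, inner_smul_right, PiLp.smul_apply, smul_eq_mul]
      congr 1
      rw [Finset.mul_sum, Finset.mul_sum]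
      refine Finset.sum_congr rfl fun i _ => ?_
      rw [Finset.mul_sum, Finset.mul_sum]
      refine Finset.sum_congr rfl fun j _ => ?_
      ring
  have hQb : Q ≤ ℓ * γ * (‖a‖ ^ 2 + σ ^ 2 / B) :=
    hHmoment.trans (mul_le_mul_of_nonneg_left hvar hlg.le)
  have hfin := final_alg a p m (ℓ ^ 2 * ‖y - ystar x‖ ^ 2) (α ^ 2 * ℓ ^ 2 * (D : ℝ) ^ 3)
    (by rw [← mul_pow]; gcongr)
    (by
      have h1 : ‖m - a‖ ^ 2 ≤ (ℓ * α * Real.sqrt D) ^ 2 := by gcongr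
      rw [mul_pow, Real.sq_sqrt (Nat.cast_nonneg D)] at h1
      have h2 : (D : ℝ) ≤ (D : ℝ) ^ 3 := by exact_mod_cast Nat.le_self_pow (by norm_num) D
      have h3 := mul_le_mul_of_nonneg_left h2 (sq_nonneg (ℓ * α))
      nlinarith)
  set I := ∫ ω, f (euclidPair (x - ζ • Ghat ω) (ystar (x - ζ • Ghat ω))) ∂μ with hI
  have hz : 2 * (ℓ * γ) * ζ = 1 := by rw [hζ]; field_simp
  have h5 : 16 * (ℓ * γ) * I ≤ 16 * (ℓ * γ) * f (euclidPair x (ystar x))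
      - 8 * inner ℝ p m + 2 * (‖a‖ ^ 2 + σ ^ 2 / B) := by
    have h6 := mul_le_mul_of_nonneg_left hstep (by positivity : 0 ≤ 16 * (ℓ * γ))
    have h7 := mul_le_mul_of_nonneg_left hQb (by positivity : 0 ≤ 8 * (ℓ * γ) * ζ ^ 2)
    have h8 : 8 * (ℓ * γ) * ζ ^ 2 * (ℓ * γ * (‖a‖ ^ 2 + σ ^ 2 / B))
        = 2 * (2 * (ℓ * γ) * ζ) ^ 2 * (‖a‖ ^ 2 + σ ^ 2 / B) := by ring
    rw [h8, hz] at h7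
    have h9 : 16 * (ℓ * γ) * (f (euclidPair x (ystar x)) - ζ * inner ℝ p m + 1 / 2 * ζ ^ 2 * Q)
      = 16 * (ℓ * γ) * f (euclidPair x (ystar x)) - 8 * (2 * (ℓ * γ) * ζ) * inner ℝ p m
        + 8 * (ℓ * γ) * ζ ^ 2 * Q := by ring
    rw [h9, hz] at h6
    linarith
  have h10 : 2 * σ ^ 2 / B = 2 * (σ ^ 2 / B) := by ring
  rw [h10]
  linarith
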